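/- Fix integers 1 ≤ n ≤ m and a prime power q. A non-decreasing sequence of positive integers d_1 ≤ d_2 ≤ ... ≤ d_k is the sequence of generalized rank weights of some F_q-linear subcode of F_q^{m×n} if and only if k ≤ mn, d_k ≤ n, and every constant subsequence of (d_1, ..., d_k) has length at most m (i.e., each value occurs at most m times among d_1, ..., d_k). -/

import Mathlib

open Module

variable {F : Type*} [Field F] [Fintype F]

/-- The maximum rank of a subspace of the matrix space `F^{m×n}`. -/
noncomputable def maxrank {m n : ℕ} (𝒜 : Submodule F (Matrix (Fin m) (Fin n) F)) : ℕ :=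
  sSup {w | ∃ A ∈ 𝒜, A.rank = w}

/-- Optimal anticodes: subspaces `𝒜 ⊆ F^{m×n}` with `dim 𝒜 = m * maxrank 𝒜`. -/
def IsOptAnticode {m n : ℕ} (𝒜 : Submodule F (Matrix (Fin m) (Fin n) F)) : Prop :=
  Module.finrank F 𝒜 = m * maxrank 𝒜

/-- The weight of a subspace `𝒟 ⊆ F^{m×n}`: the minimum of `maxrank 𝒜` over optimal
anticodes `𝒜 ⊇ 𝒟`. -/
noncomputable def rkWt {m n : ℕ} (𝒟 : Submodule F (Matrix (Fin m) (Fin n) F)) : ℕ :=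
  sInf {w | ∃ 𝒜 : Submodule F (Matrix (Fin m) (Fin n) F),
    IsOptAnticode 𝒜 ∧ 𝒟 ≤ 𝒜 ∧ maxrank 𝒜 = w}

/-- The `r`-th generalized rank weight of a rank-metric code `𝒞 ⊆ F^{m×n}`. -/
noncomputable def grw {m n : ℕ} (𝒞 : Submodule F (Matrix (Fin m) (Fin n) F)) (r : ℕ) : ℕ :=
  sInf {w | ∃ 𝒟 : Submodule F (Matrix (Fin m) (Fin n) F),
    𝒟 ≤ 𝒞 ∧ r ≤ Module.finrank F 𝒟 ∧ rkWt 𝒟 = w}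

universe u
set_option linter.unusedSectionVars false
set_option linter.unusedVariables false

section classification
variable {K : Type u} [Field K]

/-- maps with range in `R` -/
def rangeLE {U Y : Type u} [AddCommGroup U] [Module K U] [AddCommGroup Y] [Module K Y]
    (R : Submodule K Y) : Submodule K (U →ₗ[K] Y) where
  carrier := {f | ∀ x, f x ∈ R}
  add_mem' := fun ha hb x => R.add_mem (ha x) (hb x)
  zero_mem' := fun x => R.zero_mem
  smul_mem' := fun c f hf x => R.smul_mem c (hf x)

/-- maps vanishing on `S` -/
def kerGE {U Y : Type u} [AddCommGroup U] [Module K U] [AddCommGroup Y] [Module K Y]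
    (S : Submodule K U) : Submodule K (U →ₗ[K] Y) where
  carrier := {f | ∀ x ∈ S, f x = 0}
  add_mem' := fun ha hb x hx => by simp [ha x hx, hb x hx]
  zero_mem' := fun x _ => rfl
  smul_mem' := fun c f hf x hx => by simp [hf x hx]

variable {U Y : Type u} [AddCommGroup U] [Module K U] [AddCommGroup Y] [Module K Y]
variable [FiniteDimensional K U] [FiniteDimensional K Y]

theorem mem_rangeLE {R : Submodule K Y} {f : U →ₗ[K] Y} : f ∈ rangeLE R ↔ ∀ x, f x ∈ R := Iff.rfl

theorem mem_kerGE {S : Submodule K U} {f : U →ₗ[K] Y} : f ∈ kerGE S ↔ ∀ x ∈ S, f x = 0 := Iff.rfl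

theorem finrank_rangeLE (R : Submodule K Y) :
    finrank K (rangeLE R : Submodule K (U →ₗ[K] Y)) = finrank K U * finrank K R := by
  rw [← finrank_linearMap (R := K) (S := K)]
  refine LinearEquiv.finrank_eq ?_
  refine LinearEquiv.ofBijective
    { toFun := fun f => f.1.codRestrict R f.2, map_add' := fun _ _ => rfl, map_smul' := fun _ _ => rfl } ⟨?_, ?_⟩
  · intro f g h
    ext x
    have := LinearMap.congr_fun h x
    exact congrArg Subtype.val this
  · intro g
    exact ⟨⟨R.subtype.comp g, fun x => (g x).2⟩, by ext; rfl⟩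

theorem finrank_kerGE (S : Submodule K U) :
    finrank K (kerGE S : Submodule K (U →ₗ[K] Y)) = finrank K (U ⧸ S) * finrank K Y := by
  rw [← finrank_linearMap (R := K) (S := K)]
  refine LinearEquiv.finrank_eq ?_
  refine LinearEquiv.symm (LinearEquiv.ofBijective
    { toFun := fun f => ⟨f.comp S.mkQ, fun x hx => by simp [(Submodule.Quotient.mk_eq_zero S).2 hx]⟩,
      map_add' := fun _ _ => rfl, map_smul' := fun _ _ => rfl } ⟨?_, ?_⟩)
  · intro f g h
    have := congrArg Subtype.val h
    exact Submodule.linearMap_qext _ this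
  · intro g
    exact ⟨S.liftQ g.1 g.2, by ext; rfl⟩

theorem finrank_map_add_inf_ker {A B : Type u} [AddCommGroup A] [Module K A] [AddCommGroup B] [Module K B]
    [FiniteDimensional K A] (V : Submodule K A) (g : A →ₗ[K] B) :
    finrank K (V.map g) + finrank K (V ⊓ LinearMap.ker g : Submodule K A) = finrank K V := by
  have h := (g.domRestrict V).finrank_range_add_finrank_ker
  rw [LinearMap.range_domRestrict, LinearMap.ker_domRestrict] at h
  rw [← h, ← Submodule.finrank_map_subtype_eq V, Submodule.map_comap_subtype]

/-- restriction to a subspace -/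
def resTo (Y : Type u) [AddCommGroup Y] [Module K Y] (H : Submodule K U) : (U →ₗ[K] Y) →ₗ[K] (H →ₗ[K] Y) :=
  LinearMap.lcomp K Y H.subtype

theorem resTo_apply (H : Submodule K U) (f : U →ₗ[K] Y) (x : H) : resTo Y H f x = f x := rfl

/-- `{y | y ⊗ φ ∈ V}` -/
def rkOne (V : Submodule K (U →ₗ[K] Y)) (φ : U →ₗ[K] K) : Submodule K Y :=
  V.comap (LinearMap.smulRightₗ φ)

theorem mem_rkOne {V : Submodule K (U →ₗ[K] Y)} {φ : U →ₗ[K] K} {y : Y} :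
    y ∈ rkOne V φ ↔ φ.smulRight y ∈ V := Iff.rfl

theorem eq_smulRight_of_vanish {φ : U →ₗ[K] K} {e : U} (he : φ e ≠ 0) {f : U →ₗ[K] Y}
    (hk : resTo Y (LinearMap.ker φ) f = 0) : φ.smulRight ((φ e)⁻¹ • f e) = f := by
  ext x
  have h1 : x - (φ x * (φ e)⁻¹) • e ∈ LinearMap.ker φ := by
    simp [LinearMap.mem_ker, he]
  have h2 := LinearMap.congr_fun hk ⟨_, h1⟩
  rw [resTo_apply] at h2
  simp only [map_sub, map_smul, LinearMap.zero_apply, sub_eq_zero] at h2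
  rw [h2, LinearMap.smulRight_apply, smul_smul]

theorem exists_dual_apply_ne {φ : U →ₗ[K] K} (hφ : φ ≠ 0) : ∃ e, φ e ≠ 0 := by
  by_contra! h; exact hφ (LinearMap.ext h)

theorem range_resTo (H : Submodule K U) (f : U →ₗ[K] Y) :
    LinearMap.range (resTo Y H f) = H.map f := by
  ext z
  constructor
  · rintro ⟨x, rfl⟩
    exact ⟨x, x.2, rfl⟩
  · rintro ⟨x, hx, rfl⟩
    exact ⟨⟨x, hx⟩, rfl⟩

theorem finrank_rkOne (V : Submodule K (U →ₗ[K] Y)) {φ : U →ₗ[K] K} (hφ : φ ≠ 0) :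
    finrank K (V.map (resTo Y (LinearMap.ker φ))) + finrank K (rkOne V φ) = finrank K V := by
  rw [← finrank_map_add_inf_ker V (resTo Y (LinearMap.ker φ))]
  congr 1
  obtain ⟨e, he⟩ : ∃ e, φ e ≠ 0 := by
    by_contra! h; exact hφ (LinearMap.ext h)
  have hinj : Function.Injective (LinearMap.smulRightₗ φ : Y →ₗ[K] U →ₗ[K] Y) := by
    intro a b h
    have := LinearMap.congr_fun h e
    simpa [he] using this
  rw [(Submodule.equivMapOfInjective _ hinj (rkOne V φ)).finrank_eq]
  have : (rkOne V φ).map (LinearMap.smulRightₗ φ) = V ⊓ LinearMap.ker (resTo Y (LinearMap.ker φ)) := by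
    ext f
    constructor
    · rintro ⟨y, hy, rfl⟩
      refine ⟨hy, LinearMap.mem_ker.2 ?_⟩
      ext ⟨x, hx⟩
      simp [resTo_apply, LinearMap.mem_ker.1 hx]
    · rintro ⟨hf, hk⟩
      have hfe := eq_smulRight_of_vanish he (LinearMap.mem_ker.1 hk)
      exact ⟨_, mem_rkOne.2 (hfe.symm ▸ hf), hfe⟩
  rw [this]

/-- key rank increment -/
theorem rank_incr {V : Submodule K (U →ₗ[K] Y)} {w : ℕ}
    (hV : ∀ f ∈ V, finrank K (LinearMap.range f) ≤ w) {φ : U →ₗ[K] K} (hφ : φ ≠ 0)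
    {y : Y} (hy : y ∈ rkOne V φ) {f : U →ₗ[K] Y} (hf : f ∈ V)
    (hyf : y ∉ (LinearMap.ker φ).map f) : finrank K ((LinearMap.ker φ).map f) + 1 ≤ w := by
  obtain ⟨e, he⟩ : ∃ e, φ e ≠ 0 := by
    by_contra! h; exact hφ (LinearMap.ext h)
  have key : ∀ g ∈ V, (∀ x ∈ LinearMap.ker φ, g x = f x) → g e ∉ (LinearMap.ker φ).map f →
      finrank K ((LinearMap.ker φ).map f) + 1 ≤ w := by
    intro g hg h1 h2
    refine le_trans ?_ (hV g hg)
    refine Submodule.finrank_lt_finrank_of_lt (lt_of_le_of_ne ?_ ?_)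
    · rintro _ ⟨x, hx, rfl⟩
      exact ⟨x, h1 x hx⟩
    · intro h
      exact h2 (h ▸ ⟨e, rfl⟩)
  by_cases h : f e ∈ (LinearMap.ker φ).map f
  · refine key (f + φ.smulRight y) (V.add_mem hf hy) ?_ ?_
    · intro x hx
      simp [LinearMap.mem_ker.1 hx]
    · intro h'
      apply hyf
      have := Submodule.sub_mem _ h' h
      simp only [LinearMap.add_apply, LinearMap.smulRight_apply, add_sub_cancel_left] at this
      exact (Submodule.smul_mem_iff _ he).1 this
  · exact key f hf (fun _ _ => rfl) h

theorem exists_inj {A B : Type u} [AddCommGroup A] [Module K A] [AddCommGroup B] [Module K B]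
    [FiniteDimensional K A] [FiniteDimensional K B] (h : finrank K A ≤ finrank K B) :
    ∃ f : A →ₗ[K] B, Function.Injective f := finrank_le_iff_exists_linearMap.1 h

theorem exists_surj {A B : Type u} [AddCommGroup A] [Module K A] [AddCommGroup B] [Module K B]
    [FiniteDimensional K A] [FiniteDimensional K B] (h : finrank K B ≤ finrank K A) :
    ∃ f : A →ₗ[K] B, Function.Surjective f := by
  obtain ⟨g, hg⟩ := exists_inj h
  obtain ⟨f, hf⟩ := g.exists_leftInverse_of_injective (LinearMap.ker_eq_bot.2 hg)
  exact ⟨f, fun b => ⟨g b, LinearMap.congr_fun hf b⟩⟩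

/-- matrix units are in the span of rank `r` maps -/
theorem span_rank {A B : Type u} [AddCommGroup A] [Module K A] [AddCommGroup B] [Module K B]
    [FiniteDimensional K A] [FiniteDimensional K B] {r : ℕ} (h1 : 1 ≤ r) (hA : r ≤ finrank K A)
    (hB : r ≤ finrank K B) :
    Submodule.span K {f : A →ₗ[K] B | finrank K (LinearMap.range f) = r} = ⊤ := by
  let a := finBasis K A
  let b := finBasis K B
  rw [eq_top_iff, ← (a.linearMap b).span_eq, Submodule.span_le]
  rintro _ ⟨⟨j, i⟩, rfl⟩
  have hunit : a.linearMap b (j, i) = (a.coord i).smulRight (b j) := by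
    apply a.ext
    intro k
    rw [Basis.linearMap_apply_apply]
    simp [Finsupp.single_apply, eq_comm]
  rw [hunit]
  obtain rfl | h2 := h1.eq_or_lt
  · apply Submodule.subset_span
    show finrank K _ = 1
    rw [← finrank_span_singleton (K := K) (b.ne_zero j)]
    have : LinearMap.range ((a.coord i).smulRight (b j)) = Submodule.span K {b j} := by
      ext z
      rw [Submodule.mem_span_singleton]
      constructor
      · rintro ⟨x, rfl⟩
        exact ⟨a.coord i x, rfl⟩
      · rintro ⟨c, rfl⟩
        exact ⟨c • a i, by simp⟩
    rw [this]
  ·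
    let σ : Fin r → Fin (finrank K A) := fun s => Equiv.swap (Fin.castLE hA ⟨0, by omega⟩) i (Fin.castLE hA s)
    let τ : Fin r → Fin (finrank K B) := fun s => Equiv.swap (Fin.castLE hB ⟨1, by omega⟩) j (Fin.castLE hB s)
    have hσ : Function.Injective σ := (Equiv.injective _).comp (Fin.castLE_injective hA)
    have hτ : Function.Injective τ := (Equiv.injective _).comp (Fin.castLE_injective hB)
    have hσ0 : σ ⟨0, by omega⟩ = i := by simp [σ]
    have hτ1 : τ ⟨1, by omega⟩ = j := by simp [τ]
    let P : A →ₗ[K] (Fin r → K) := (LinearMap.funLeft K K σ).comp a.equivFun.toLinearMap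
    let Q : (Fin r → K) →ₗ[K] B := Fintype.linearCombination K (b ∘ τ)
    have hP : Function.Surjective P := by
      exact (LinearMap.funLeft_surjective_of_injective K K σ hσ).comp a.equivFun.surjective
    have hQ : Function.Injective Q := by
      have := (b.linearIndependent.comp τ hτ).fintypeLinearCombination_injective
      exact this
    have hrk : ∀ T : (Fin r → K) →ₗ[K] (Fin r → K), Function.Injective T →
        finrank K (LinearMap.range (Q.comp (T.comp P))) = r := by
      intro T hT
      rw [← LinearMap.comp_assoc, LinearMap.range_comp_of_range_eq_top _ (LinearMap.range_eq_top.2 hP),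
        LinearMap.finrank_range_of_inj (by rw [LinearMap.coe_comp]; exact hQ.comp hT)]
      simp
    let E : (Fin r → K) →ₗ[K] (Fin r → K) :=
      (LinearMap.proj ⟨0, by omega⟩).smulRight (Pi.single ⟨1, by omega⟩ 1)
    have hE : Function.Injective (LinearMap.id + E : (Fin r → K) →ₗ[K] (Fin r → K)) := by
      rw [← LinearMap.ker_eq_bot, LinearMap.ker_eq_bot']
      intro x hx
      have h0 : x ⟨0, by omega⟩ = 0 := by
        have := congrFun hx ⟨0, by omega⟩
        simpa [E, Pi.single_apply] using this
      simpa [E, h0] using hx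
    have heq : (a.coord i).smulRight (b j) = Q.comp ((LinearMap.id + E).comp P) - Q.comp (LinearMap.id.comp P) := by
      ext x
      simp only [E, Q, P, LinearMap.add_comp, LinearMap.comp_add, LinearMap.sub_apply, LinearMap.add_apply]
      simp [LinearMap.funLeft, hσ0, hτ1, Fintype.linearCombination_apply_single]
    rw [heq]
    exact Submodule.sub_mem _ (Submodule.subset_span (hrk _ hE)) (Submodule.subset_span (hrk LinearMap.id Function.injective_id))

end classification


section classification2
variable {K : Type u} [Field K]
variable {U Y : Type u} [AddCommGroup U] [Module K U] [AddCommGroup Y] [Module K Y]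
variable [FiniteDimensional K U] [FiniteDimensional K Y]

variable (K U Y) in
/-- The Dieudonné–Meshulam type classification for the pair `(U, Y)`. -/
def Good : Prop :=
  ∀ (V : Submodule K (U →ₗ[K] Y)) (w : ℕ), w ≤ finrank K U → w ≤ finrank K Y →
    (∀ f ∈ V, finrank K (LinearMap.range f) ≤ w) →
    finrank K V ≤ w * max (finrank K U) (finrank K Y) ∧
    (finrank K V = w * max (finrank K U) (finrank K Y) →
      (finrank K Y ≤ finrank K U ∧ ∃ R : Submodule K Y, finrank K R = w ∧ V = rangeLE R) ∨
      (finrank K U ≤ finrank K Y ∧ ∃ S : Submodule K U, finrank K S + w = finrank K U ∧ V = kerGE S))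

theorem rank_ext {V : Submodule K (U →ₗ[K] Y)} {w : ℕ}
    (hV : ∀ f ∈ V, finrank K (LinearMap.range f) ≤ w) {H : Submodule K U} {e : U}
    {f : U →ₗ[K] Y} (hf : f ∈ V) (he : f e ∉ H.map f) : finrank K (H.map f) + 1 ≤ w := by
  refine le_trans ?_ (hV f hf)
  refine Submodule.finrank_lt_finrank_of_lt (lt_of_le_of_ne ?_ ?_)
  · rintro _ ⟨x, hx, rfl⟩
    exact ⟨x, rfl⟩
  · intro h
    exact he (h ▸ ⟨e, rfl⟩)

theorem map_rank_le {V : Submodule K (U →ₗ[K] Y)} {w : ℕ}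
    (hV : ∀ f ∈ V, finrank K (LinearMap.range f) ≤ w) (H : Submodule K U)
    {f : U →ₗ[K] Y} (hf : f ∈ V) : finrank K (H.map f) ≤ w := by
  refine le_trans (Submodule.finrank_mono ?_) (hV f hf)
  rintro _ ⟨x, hx, rfl⟩
  exact ⟨x, rfl⟩

theorem res_rank_le {V : Submodule K (U →ₗ[K] Y)} {w : ℕ}
    (hV : ∀ f ∈ V, finrank K (LinearMap.range f) ≤ w) (H : Submodule K U) :
    ∀ g ∈ V.map (resTo Y H), finrank K (LinearMap.range g) ≤ w := by
  rintro _ ⟨f, hf, rfl⟩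
  rw [range_resTo]
  exact map_rank_le hV H hf

theorem res_rank_lt {V : Submodule K (U →ₗ[K] Y)} {w : ℕ}
    (hV : ∀ f ∈ V, finrank K (LinearMap.range f) ≤ w) {φ : U →ₗ[K] K} (hφ : φ ≠ 0)
    (hr : w < finrank K (rkOne V φ)) :
    ∀ g ∈ V.map (resTo Y (LinearMap.ker φ)), finrank K (LinearMap.range g) ≤ w - 1 := by
  rintro _ ⟨f, hf, rfl⟩
  rw [range_resTo]
  have h1 := map_rank_le hV (LinearMap.ker φ) hf
  have h2 : ¬ rkOne V φ ≤ (LinearMap.ker φ).map f := by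
    intro h
    have := Submodule.finrank_mono h
    omega
  obtain ⟨y, hy, hy'⟩ := SetLike.not_le_iff_exists.1 h2
  have := rank_incr hV hφ hy hf hy'
  omega

theorem finrank_ker_succ {φ : U →ₗ[K] K} (hφ : φ ≠ 0) :
    finrank K (LinearMap.ker φ) + 1 = finrank K U :=
  Module.Dual.finrank_ker_add_one_of_ne_zero hφ

theorem good_trivial (V : Submodule K (U →ₗ[K] Y)) (w : ℕ) (hn : finrank K Y ≤ finrank K U)
    (hV : ∀ f ∈ V, finrank K (LinearMap.range f) ≤ w) (hw : w = 0 ∨ w = finrank K Y) :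
    ∃ R : Submodule K Y, finrank K R = w ∧ V ≤ rangeLE R := by
  rcases hw with rfl | rfl
  · refine ⟨⊥, by simp, fun f hf x => ?_⟩
    have := hV f hf
    rw [Nat.le_zero, Submodule.finrank_eq_zero] at this
    have hx : f x ∈ LinearMap.range f := ⟨x, rfl⟩
    rwa [this] at hx
  · exact ⟨⊤, finrank_top K Y, fun f hf x => trivial⟩

theorem step_gt (hnm : finrank K Y < finrank K U)
    (IH : ∀ H : Submodule K U, finrank K H < finrank K U → Good K H Y)
    (V : Submodule K (U →ₗ[K] Y)) (w : ℕ) (hw1 : 1 ≤ w) (hw : w < finrank K Y)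
    (hV : ∀ f ∈ V, finrank K (LinearMap.range f) ≤ w) :
    finrank K V ≤ w * finrank K U ∧
    (finrank K V = w * finrank K U → ∃ R : Submodule K Y, finrank K R = w ∧ V = rangeLE R) := by
  obtain ⟨n', hn'⟩ : ∃ n', finrank K U = n' + 1 := ⟨finrank K U - 1, by omega⟩
  have bound : ∀ φ : U →ₗ[K] K, φ ≠ 0 → finrank K V ≤ w * (n' + 1) ∧
      (finrank K V = w * (n' + 1) → finrank K (rkOne V φ) = w ∧
        finrank K (V.map (resTo Y (LinearMap.ker φ))) = w * n') := by
    intro φ hφ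
    have hH := finrank_ker_succ hφ
    have hH' : finrank K (LinearMap.ker φ) = n' := by omega
    have hsum := finrank_rkOne V hφ
    have hmax : max n' (finrank K Y) = n' := max_eq_left (by omega)
    have good := IH (LinearMap.ker φ) (by omega)
    rw [mul_add, mul_one]
    by_cases hr : finrank K (rkOne V φ) ≤ w
    · have h1 := (good _ w (by omega) (by omega) (res_rank_le hV _)).1
      rw [hH', hmax] at h1
      constructor
      · omega
      · intro; constructor <;> omega
    · have h1 := (good _ (w - 1) (by omega) (by omega) (res_rank_lt hV hφ (by omega))).1
      rw [hH', hmax] at h1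
      have h2 := Submodule.finrank_le (rkOne V φ)
      have h3 : (w - 1) * n' + n' = w * n' := by
        obtain ⟨v, rfl⟩ : ∃ v, w = v + 1 := ⟨w - 1, by omega⟩
        simp; ring
      constructor
      · omega
      · intro; exfalso; omega
  have claim : finrank K V = w * (n' + 1) → ∀ φ : U →ₗ[K] K, φ ≠ 0 → finrank K (rkOne V φ) = w ∧
      ∀ f ∈ V, ∀ x ∈ LinearMap.ker φ, f x ∈ rkOne V φ := by
    intro heq φ hφ
    obtain ⟨hr, hm⟩ := (bound φ hφ).2 heq
    refine ⟨hr, ?_⟩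
    have hH := finrank_ker_succ hφ
    have hH' : finrank K (LinearMap.ker φ) = n' := by omega
    have hmax : max n' (finrank K Y) = n' := max_eq_left (by omega)
    have good := (IH (LinearMap.ker φ) (by omega) _ w (by omega) (by omega) (res_rank_le hV _)).2
    rw [hH', hmax] at good
    rcases good hm with ⟨_, R, hR, hVR⟩ | ⟨hle, S, hS, hVS⟩
    · have hYR : rkOne V φ ≤ R := by
        obtain ⟨g, hg⟩ := exists_surj (K := K) (A := LinearMap.ker φ) (B := R) (by omega)
        have hgm : R.subtype.comp g ∈ V.map (resTo Y (LinearMap.ker φ)) := by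
          rw [hVR]; exact fun x => (g x).2
        obtain ⟨f, hf, hfg⟩ := hgm
        have hfR : (LinearMap.ker φ).map f = R := by
          rw [← range_resTo, hfg, LinearMap.range_comp_of_range_eq_top _ (LinearMap.range_eq_top.2 hg),
            Submodule.range_subtype]
        intro y hy
        by_contra hyR
        have := rank_incr hV hφ hy hf (by rwa [hfR])
        rw [hfR] at this
        omega
      have : rkOne V φ = R := Submodule.eq_of_le_of_finrank_eq hYR (by omega)
      intro f hf x hx
      rw [this]
      have h1 : resTo Y (LinearMap.ker φ) f ∈ (rangeLE R : Submodule K (LinearMap.ker φ →ₗ[K] Y)) := by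
        rw [← hVR]; exact ⟨f, hf, rfl⟩
      exact h1 ⟨x, hx⟩
    · exfalso
      have hne : rkOne V φ ≠ ⊥ := by
        intro h; rw [h, finrank_bot] at hr; omega
      obtain ⟨y, hy, hy0⟩ := Submodule.exists_mem_ne_zero_of_ne_bot hne
      obtain ⟨C, hC⟩ := Submodule.exists_isCompl (Submodule.span K {y})
      have hCd := Submodule.finrank_add_eq_of_isCompl hC
      rw [finrank_span_singleton hy0] at hCd
      have hqd := Submodule.finrank_quotient_add_finrank S
      obtain ⟨Q, hQ⟩ := exists_inj (K := K) (A := LinearMap.ker φ ⧸ S) (B := C) (by omega)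
      have hgm : (C.subtype.comp Q).comp S.mkQ ∈ V.map (resTo Y (LinearMap.ker φ)) := by
        rw [hVS]
        intro x hx
        simp [(Submodule.Quotient.mk_eq_zero S).2 hx]
      obtain ⟨f, hf, hfg⟩ := hgm
      have hfm : (LinearMap.ker φ).map f = LinearMap.range (C.subtype.comp Q) := by
        rw [← range_resTo, hfg, LinearMap.range_comp_of_range_eq_top _ S.range_mkQ]
      have hfr : finrank K ((LinearMap.ker φ).map f) = w := by
        rw [hfm, LinearMap.finrank_range_of_inj (by rw [LinearMap.coe_comp]; exact C.injective_subtype.comp hQ)]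
        omega
      have := rank_incr hV hφ hy hf (by
        rw [hfm]
        rintro ⟨z, hz⟩
        have hyC : y ∈ C := hz ▸ (Q z).2
        exact hy0 ((Submodule.disjoint_def.1 hC.disjoint) y (Submodule.mem_span_singleton_self y) hyC))
      omega
  have : Nontrivial U := by
    apply Module.nontrivial_of_finrank_pos (R := K); omega
  obtain ⟨u, hu⟩ := exists_ne (0 : U)
  obtain ⟨φ, hφu⟩ := Projective.exists_dual_eq_one K hu
  have hφ : φ ≠ 0 := by rintro rfl; simp at hφu
  rw [hn']
  refine ⟨(bound φ hφ).1, fun heq => ?_⟩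
  have hker : LinearMap.ker φ ≠ ⊥ := by
    intro h
    have := finrank_ker_succ hφ
    rw [h, finrank_bot] at this
    omega
  obtain ⟨x, hx, hx0⟩ := Submodule.exists_mem_ne_zero_of_ne_bot hker
  obtain ⟨φ', hφ'x⟩ := Projective.exists_dual_eq_one K hx0
  have hφ' : φ' ≠ 0 := by rintro rfl; simp at hφ'x
  obtain ⟨hd, hc⟩ := claim heq φ hφ
  obtain ⟨hd', hc'⟩ := claim heq φ' hφ'
  have hle : rkOne V φ' ≤ rkOne V φ := by
    intro y hy
    have := hc _ (mem_rkOne.1 hy) x hx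
    simpa [hφ'x] using this
  have hee : rkOne V φ' = rkOne V φ := Submodule.eq_of_le_of_finrank_eq hle (by omega)
  refine ⟨rkOne V φ, hd, Submodule.eq_of_le_of_finrank_eq ?_ ?_⟩
  · intro f hf z
    have h1 : z - φ' z • x ∈ LinearMap.ker φ' := by simp [LinearMap.mem_ker, hφ'x]
    have h2 := hc' f hf _ h1
    rw [hee] at h2
    have h3 := Submodule.add_mem _ h2 (Submodule.smul_mem _ (φ' z) (hc f hf x hx))
    simpa using h3
  · rw [finrank_rangeLE, heq, hd, hn', mul_comm]

end classification2


section classification3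
variable {K : Type u} [Field K]
variable {U Y : Type u} [AddCommGroup U] [Module K U] [AddCommGroup Y] [Module K Y]
variable [FiniteDimensional K U] [FiniteDimensional K Y]

theorem ext_lemma {V : Submodule K (U →ₗ[K] Y)} {w : ℕ} (hw1 : 1 ≤ w)
    (hV : ∀ f ∈ V, finrank K (LinearMap.range f) ≤ w) (H : Submodule K U) (e : U)
    (S : Submodule K H) (R : Submodule K Y) (hS : w ≤ finrank K (H ⧸ S)) (hR : w ≤ finrank K R)
    (hyp : ∀ g : H →ₗ[K] Y, g ∈ kerGE S → g ∈ rangeLE R → g ∈ V.map (resTo Y H))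
    (g : H →ₗ[K] Y) (hg1 : g ∈ kerGE S) (hg2 : g ∈ rangeLE R) :
    ∃ f ∈ V, resTo Y H f = g ∧ f e ∈ R := by
  let T : (H ⧸ S →ₗ[K] R) →ₗ[K] (H →ₗ[K] Y) :=
    { toFun := fun h => (R.subtype.comp h).comp S.mkQ
      map_add' := fun _ _ => rfl
      map_smul' := fun _ _ => rfl }
  let V' : Submodule K (U →ₗ[K] Y) := V ⊓ R.comap (LinearMap.applyₗ e)
  have htop : (V'.map (resTo Y H)).comap T = ⊤ := by
    rw [eq_top_iff, ← span_rank hw1 hS hR, Submodule.span_le]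
    intro h hh
    have hh : finrank K (LinearMap.range h) = w := hh
    have hT : T h ∈ V.map (resTo Y H) := by
      apply hyp
      · intro x hx
        show ((h (S.mkQ x) : R) : Y) = 0
        rw [Submodule.mkQ_apply, (Submodule.Quotient.mk_eq_zero S).2 hx, map_zero]; rfl
      · intro x; exact (h _).2
    obtain ⟨f, hf, hfT⟩ := hT
    have hfm : H.map f = (LinearMap.range h).map R.subtype := by
      rw [← range_resTo, hfT]
      show LinearMap.range ((R.subtype.comp h).comp S.mkQ) = _
      rw [LinearMap.range_comp_of_range_eq_top _ S.range_mkQ, LinearMap.range_comp]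
    have hfe : f e ∈ H.map f := by
      by_contra hne
      have := rank_ext hV hf hne
      rw [hfm, Submodule.finrank_map_subtype_eq, hh] at this
      omega
    rw [hfm] at hfe
    obtain ⟨z, _, hz⟩ := hfe
    refine ⟨f, ⟨hf, ?_⟩, hfT⟩
    show f e ∈ R
    rw [← hz]; exact z.2
  let h : H ⧸ S →ₗ[K] R := S.liftQ (g.codRestrict R hg2) (by
    intro x hx
    rw [LinearMap.mem_ker]
    exact Subtype.ext (hg1 x hx))
  have hmem : h ∈ (V'.map (resTo Y H)).comap T := by rw [htop]; trivial
  obtain ⟨f, hf, hfT⟩ := hmem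
  refine ⟨f, hf.1, ?_, hf.2⟩
  rw [hfT]
  ext x; rfl

theorem rangeLE_le_of_span {H : Type u} [AddCommGroup H] [Module K H] [FiniteDimensional K H]
    {W : Submodule K (H →ₗ[K] Y)} {R : Submodule K Y}
    (h : ∀ y ∈ R, y ≠ 0 → rangeLE (Submodule.span K {y}) ≤ W) : rangeLE R ≤ W := by
  intro g hg
  let b := finBasis K H
  have : g = ∑ i, (b.coord i).smulRight (g (b i)) := by
    apply b.ext
    intro j
    simp [Finsupp.single_apply, LinearMap.sum_apply]
  rw [this]
  refine Submodule.sum_mem _ fun i _ => ?_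
  by_cases h0 : g (b i) = 0
  · rw [h0]; convert W.zero_mem; ext; simp
  · refine h _ (hg _) h0 fun x => ?_
    exact Submodule.smul_mem _ _ (Submodule.mem_span_singleton_self _)

/-- square case, no rank one elements -/
theorem step_eq_none (hnm : finrank K Y = finrank K U)
    (IH : ∀ H : Submodule K U, finrank K H < finrank K U → Good K H Y)
    (V : Submodule K (U →ₗ[K] Y)) (w : ℕ) (hw1 : 1 ≤ w) (hw : w < finrank K U)
    (hV : ∀ f ∈ V, finrank K (LinearMap.range f) ≤ w)
    (hno : ∀ φ : U →ₗ[K] K, φ ≠ 0 → rkOne V φ = ⊥) :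
    finrank K V < w * finrank K U := by
  have : Nontrivial U := by
    apply Module.nontrivial_of_finrank_pos (R := K); omega
  obtain ⟨e, he0⟩ := exists_ne (0 : U)
  obtain ⟨φ, hφe⟩ := Projective.exists_dual_eq_one K he0
  have hφ : φ ≠ 0 := by rintro rfl; simp at hφe
  have hH := finrank_ker_succ hφ
  have hsum := finrank_rkOne V hφ
  rw [hno φ hφ, finrank_bot, add_zero] at hsum
  have good := IH (LinearMap.ker φ) (by omega) _ w (by omega) (by omega) (res_rank_le hV _)
  rw [max_eq_right (by omega), hsum, hnm] at good
  refine lt_of_le_of_ne good.1 fun heq => ?_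
  rcases good.2 heq with ⟨h, _⟩ | ⟨_, S, hS, hVS⟩
  · omega
  have hSneTop : S ≠ ⊤ := by
    rintro rfl
    rw [finrank_top] at hS; omega
  obtain ⟨ℓ, hℓ0, hℓ⟩ := Submodule.exists_le_ker_of_lt_top S (lt_top_iff_ne_top.2 hSneTop)
  have : Nontrivial Y := by
    apply Module.nontrivial_of_finrank_pos (R := K); omega
  obtain ⟨y, hy0⟩ := exists_ne (0 : Y)
  have hgS : ℓ.smulRight y ∈ kerGE S := by
    intro x hx
    simp [LinearMap.mem_ker.1 (hℓ hx)]
  obtain ⟨f, hf, hfg⟩ : ℓ.smulRight y ∈ V.map (resTo Y (LinearMap.ker φ)) := by rw [hVS]; exact hgS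
  have hfe : f e ∈ Submodule.span K {y} := by
    by_contra hne
    obtain ⟨η, hη, hη'⟩ := Submodule.exists_le_ker_of_notMem hne
    have hη0 : η ≠ 0 := by rintro rfl; simp at hη
    have hηd := finrank_ker_succ hη0
    have hqd := Submodule.finrank_quotient_add_finrank S
    obtain ⟨f', hf', hfg', hfe'⟩ := ext_lemma hw1 hV (LinearMap.ker φ) e S (LinearMap.ker η) (by omega) (by omega)
      (fun g hg _ => by rw [hVS]; exact hg) (ℓ.smulRight y) hgS (fun x => by
        have : η y = 0 := hη' (Submodule.mem_span_singleton_self y)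
        simp [this])
    have hz : resTo Y (LinearMap.ker φ) (f - f') = 0 := by rw [map_sub, hfg, hfg', sub_self]
    have h1 := eq_smulRight_of_vanish (by rw [hφe]; exact one_ne_zero) hz
    have h2 : (φ e)⁻¹ • (f - f') e ∈ rkOne V φ := by
      rw [mem_rkOne, h1]; exact V.sub_mem hf hf'
    rw [hno φ hφ, Submodule.mem_bot] at h2
    rw [h2] at h1
    have h3 : f = f' := by
      rw [← sub_eq_zero, ← h1]; ext; simp
    rw [h3] at hη
    exact hη hfe'
  have hrange : ∀ x, f x ∈ Submodule.span K {y} := by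
    intro x
    have h1 : x - φ x • e ∈ LinearMap.ker φ := by simp [LinearMap.mem_ker, hφe]
    have h2 := LinearMap.congr_fun hfg ⟨_, h1⟩
    rw [resTo_apply, LinearMap.smulRight_apply] at h2
    have h3 : f x = f (x - φ x • e) + φ x • f e := by simp
    rw [h3]
    refine Submodule.add_mem _ ?_ (Submodule.smul_mem _ _ hfe)
    rw [show f (x - φ x • e) = _ from h2]
    exact Submodule.smul_mem _ _ (Submodule.mem_span_singleton_self _)
  obtain ⟨η, hη⟩ := Projective.exists_dual_eq_one K hy0
  have hfη : (η.comp f).smulRight y = f := by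
    ext x
    obtain ⟨c, hc⟩ := Submodule.mem_span_singleton.1 (hrange x)
    simp [← hc, hη]
  by_cases h0 : η.comp f = 0
  · have hf0 : f = 0 := by rw [← hfη, h0]; ext; simp
    rw [hf0, map_zero] at hfg
    obtain ⟨z, hz⟩ := exists_dual_apply_ne hℓ0
    have := LinearMap.congr_fun hfg z
    rw [LinearMap.smulRight_apply, LinearMap.zero_apply] at this
    exact smul_ne_zero hz hy0 this.symm
  · have : y ∈ rkOne V (η.comp f) := by rw [mem_rkOne, hfη]; exact hf
    rw [hno _ h0] at this
    exact hy0 this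

theorem step_eq_some (hnm : finrank K Y = finrank K U)
    (IH : ∀ H : Submodule K U, finrank K H < finrank K U → Good K H Y)
    (IH2 : ∀ (H : Submodule K U) (y : Y), y ≠ 0 → finrank K H < finrank K U → Good K H (Y ⧸ Submodule.span K {y}))
    (V : Submodule K (U →ₗ[K] Y)) (w : ℕ) (hw1 : 1 ≤ w) (hw : w < finrank K U)
    (hV : ∀ f ∈ V, finrank K (LinearMap.range f) ≤ w)
    {φ : U →ₗ[K] K} (hφ : φ ≠ 0) (hex : rkOne V φ ≠ ⊥) :
    finrank K V ≤ w * finrank K U ∧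
    (finrank K V = w * finrank K U →
      (∃ R : Submodule K Y, finrank K R = w ∧ V = rangeLE R) ∨
      (∃ S : Submodule K U, finrank K S + w = finrank K U ∧ V = kerGE S)) := by
  obtain ⟨n', hn'⟩ : ∃ n', finrank K U = n' + 1 := ⟨finrank K U - 1, by omega⟩
  obtain ⟨v, rfl⟩ : ∃ v, w = v + 1 := ⟨w - 1, by omega⟩
  have hH := finrank_ker_succ hφ
  have hH' : finrank K (LinearMap.ker φ) = n' := by omega
  have hsum := finrank_rkOne V hφ
  obtain ⟨e, he⟩ := exists_dual_apply_ne hφ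
  by_cases hr : v + 1 < finrank K (rkOne V φ)
  · have good := IH (LinearMap.ker φ) (by omega) _ (v + 1 - 1) (by omega) (by omega) (res_rank_lt hV hφ hr)
    rw [max_eq_right (by omega), hnm, Nat.add_sub_cancel] at good
    have h2 := Submodule.finrank_le (rkOne V φ)
    rw [add_mul, one_mul]
    refine ⟨by omega, fun heq => Or.inr ?_⟩
    rcases good.2 (by omega) with ⟨h, _⟩ | ⟨_, S, hS, hVS⟩
    · omega
    · have hS' : finrank K (S.map (LinearMap.ker φ).subtype) = finrank K S := Submodule.finrank_map_subtype_eq _ _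
      refine ⟨S.map (LinearMap.ker φ).subtype, by omega, Submodule.eq_of_le_of_finrank_eq ?_ ?_⟩
      · rintro f hf _ ⟨x, hx, rfl⟩
        have : resTo Y (LinearMap.ker φ) f ∈ (kerGE S : Submodule K (LinearMap.ker φ →ₗ[K] Y)) := by
          rw [← hVS]; exact ⟨f, hf, rfl⟩
        exact this x hx
      · rw [finrank_kerGE, heq, hnm]
        have := Submodule.finrank_quotient_add_finrank (S.map (LinearMap.ker φ).subtype)
        have h3 : finrank K (U ⧸ S.map (LinearMap.ker φ).subtype) = v + 1 := by omega
        rw [h3]; ring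
  · push Not at hr
    have main : ∀ y ∈ rkOne V φ, y ≠ 0 →
        finrank K (V.map (resTo Y (LinearMap.ker φ))) ≤ (v + 1) * n' ∧
        (finrank K (V.map (resTo Y (LinearMap.ker φ))) = (v + 1) * n' →
          rangeLE (Submodule.span K {y}) ≤ V.map (resTo Y (LinearMap.ker φ))) := by
      intro y hy hy0
      set W := V.map (resTo Y (LinearMap.ker φ)) with hW
      let q : (LinearMap.ker φ →ₗ[K] Y) →ₗ[K] (LinearMap.ker φ →ₗ[K] (Y ⧸ Submodule.span K {y})) :=
        { toFun := fun g => (Submodule.span K {y}).mkQ.comp g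
          map_add' := fun a b => by ext; simp
          map_smul' := fun a b => by ext; simp }
      have h1 := finrank_map_add_inf_ker W q
      have hkq : W ⊓ LinearMap.ker q ≤ rangeLE (Submodule.span K {y}) := by
        rintro g ⟨_, hg⟩ x
        have := LinearMap.congr_fun (LinearMap.mem_ker.1 hg) x
        exact (Submodule.Quotient.mk_eq_zero _).1 this
      have hfr : finrank K (rangeLE (Submodule.span K {y}) : Submodule K (LinearMap.ker φ →ₗ[K] Y)) = n' := by
        rw [finrank_rangeLE, hH', finrank_span_singleton hy0, mul_one]
      have h2 := Submodule.finrank_mono hkq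
      have hQ := Submodule.finrank_quotient_add_finrank (Submodule.span K {y})
      rw [finrank_span_singleton hy0] at hQ
      have h3 := (IH2 (LinearMap.ker φ) y hy0 (by omega) (W.map q) v (by omega) (by omega) (by
        rintro _ ⟨_, ⟨f, hf, rfl⟩, rfl⟩
        have hrg : LinearMap.range (q (resTo Y (LinearMap.ker φ) f)) =
            ((LinearMap.ker φ).map f).map (Submodule.span K {y}).mkQ := by
          show LinearMap.range ((Submodule.span K {y}).mkQ.comp _) = _
          rw [LinearMap.range_comp, range_resTo]
        rw [hrg]
        have h4 := finrank_map_add_inf_ker ((LinearMap.ker φ).map f) (Submodule.span K {y}).mkQ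
        rw [Submodule.ker_mkQ] at h4
        by_cases hyf : y ∈ (LinearMap.ker φ).map f
        · have h5 := map_rank_le hV (LinearMap.ker φ) hf
          rw [inf_eq_right.2 ((Submodule.span_singleton_le_iff_mem _ _).2 hyf), finrank_span_singleton hy0] at h4
          omega
        · have h5 := rank_incr hV hφ hy hf hyf
          omega)).1
      rw [max_eq_left (by omega), hH'] at h3
      rw [add_mul, one_mul]
      refine ⟨by omega, fun heq => ?_⟩
      have : W ⊓ LinearMap.ker q = rangeLE (Submodule.span K {y}) :=
        Submodule.eq_of_le_of_finrank_le hkq (by omega)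
      rw [← this]; exact inf_le_left
    obtain ⟨y, hy, hy0⟩ := Submodule.exists_mem_ne_zero_of_ne_bot hex
    have hb := (main y hy hy0).1
    rw [hn', mul_add, mul_one]
    refine ⟨by omega, fun heq => Or.inl ?_⟩
    have hW : finrank K (V.map (resTo Y (LinearMap.ker φ))) = (v + 1) * n' := by omega
    have hR : finrank K (rkOne V φ) = v + 1 := by omega
    have hle := rangeLE_le_of_span (R := rkOne V φ) fun y hy hy0 => (main y hy hy0).2 hW
    have hWR := Submodule.eq_of_le_of_finrank_eq hle (by rw [finrank_rangeLE, hH', hR, hW, mul_comm])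
    refine ⟨rkOne V φ, hR, Submodule.eq_of_le_of_finrank_eq ?_ ?_⟩
    · intro f hf
      have hgR : resTo Y (LinearMap.ker φ) f ∈ (rangeLE (rkOne V φ) : Submodule K (LinearMap.ker φ →ₗ[K] Y)) := by
        rw [hWR]; exact ⟨f, hf, rfl⟩
      have hqb := Submodule.finrank_quotient_add_finrank (⊥ : Submodule K (LinearMap.ker φ))
      rw [finrank_bot] at hqb
      obtain ⟨f', hf', hfg', hfe'⟩ := ext_lemma hw1 hV (LinearMap.ker φ) e ⊥ (rkOne V φ) (by omega) (by omega)
        (fun g _ hg => by rw [← hWR]; exact hg) (resTo Y (LinearMap.ker φ) f)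
        (by rintro x hx; rw [(Submodule.mem_bot K).1 hx, map_zero]) hgR
      have hz : resTo Y (LinearMap.ker φ) (f - f') = 0 := by rw [map_sub, hfg', sub_self]
      have h1 := eq_smulRight_of_vanish he hz
      have h2 : (φ e)⁻¹ • (f - f') e ∈ rkOne V φ := by
        rw [mem_rkOne, h1]; exact V.sub_mem hf hf'
      have h3 : f e ∈ rkOne V φ := by
        have := Submodule.add_mem _ ((Submodule.smul_mem_iff _ (inv_ne_zero he)).1 h2) hfe'
        simpa using this
      intro x
      have h4 : x - (φ x * (φ e)⁻¹) • e ∈ LinearMap.ker φ := by simp [LinearMap.mem_ker, he]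
      have h5 := Submodule.add_mem _ (hgR ⟨_, h4⟩) (Submodule.smul_mem _ (φ x * (φ e)⁻¹) h3)
      rw [resTo_apply, ← map_smul, ← map_add] at h5
      simpa using h5
    · rw [finrank_rangeLE, heq, hR, hn']; ring

theorem good_of_dual (h : Good K (Dual K Y) (Dual K U)) : Good K U Y := by
  intro V w hwU hwY hV
  let T : (U →ₗ[K] Y) →ₗ[K] (Dual K Y →ₗ[K] Dual K U) := Module.Dual.transpose
  have hTapp : ∀ f ψ x, T f ψ x = ψ (f x) := fun _ _ _ => rfl
  have hT : Function.Injective T := by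
    intro f g hfg
    ext x
    rw [← sub_eq_zero, ← Module.forall_dual_apply_eq_zero_iff K]
    intro ψ
    have := LinearMap.congr_fun (LinearMap.congr_fun hfg ψ) x
    rw [hTapp, hTapp] at this
    rw [map_sub, this, sub_self]
  have hd : finrank K (V.map T) = finrank K V := (Submodule.equivMapOfInjective T hT V).finrank_eq.symm
  have := h (V.map T) w (by rwa [Subspace.dual_finrank_eq]) (by rwa [Subspace.dual_finrank_eq]) (by
    rintro _ ⟨f, hf, rfl⟩
    have : finrank K (LinearMap.range (T f)) = finrank K (LinearMap.range f) :=
      LinearMap.finrank_range_dualMap_eq_finrank_range f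
    rw [this]
    exact hV f hf)
  rw [hd, Subspace.dual_finrank_eq, Subspace.dual_finrank_eq, max_comm] at this
  refine ⟨this.1, fun heq => ?_⟩
  have hmem : ∀ f, f ∈ V ↔ T f ∈ V.map T := fun f =>
    ⟨fun hf => ⟨f, hf, rfl⟩, fun ⟨g, hg, hgf⟩ => hT hgf ▸ hg⟩
  rcases this.2 heq with ⟨hle, R, hR, hVR⟩ | ⟨hle, S, hS, hVS⟩
  · refine Or.inr ⟨hle, R.dualCoannihilator, ?_, ?_⟩
    · have := Subspace.finrank_add_finrank_dualCoannihilator_eq R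
      omega
    · ext f
      rw [hmem, hVR, mem_rangeLE, mem_kerGE]
      constructor
      · intro h x hx
        rw [← Module.forall_dual_apply_eq_zero_iff K]
        intro ψ
        exact (Submodule.mem_dualCoannihilator x).1 hx _ (h ψ)
      · intro h ψ
        rw [← Subspace.dualCoannihilator_dualAnnihilator_eq (W := R), Submodule.mem_dualAnnihilator]
        intro x hx
        rw [hTapp, h x hx, map_zero]
  · refine Or.inl ⟨hle, S.dualCoannihilator, ?_, ?_⟩
    · have := Subspace.finrank_add_finrank_dualCoannihilator_eq S
      omega
    · ext f
      rw [hmem, hVS, mem_rangeLE, mem_kerGE]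
      constructor
      · intro h x
        rw [Submodule.mem_dualCoannihilator]
        intro ψ hψ
        exact LinearMap.congr_fun (h ψ hψ) x
      · intro h ψ hψ
        ext x
        exact (Submodule.mem_dualCoannihilator _).1 (h x) ψ hψ

end classification3

theorem good_aux {K : Type u} [Field K] (s : ℕ) : ∀ (U Y : Type u) [AddCommGroup U] [Module K U] [AddCommGroup Y] [Module K Y]
    [FiniteDimensional K U] [FiniteDimensional K Y], finrank K U + finrank K Y = s → Good K U Y := by
  induction s using Nat.strong_induction_on with
  | _ s ih =>
  have half : ∀ (U Y : Type u) [AddCommGroup U] [Module K U] [AddCommGroup Y] [Module K Y]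
    [FiniteDimensional K U] [FiniteDimensional K Y], finrank K U + finrank K Y = s →
      finrank K Y ≤ finrank K U → Good K U Y := by
    intro U Y _ _ _ _ _ _ hs hle V w hwU hwY hV
    rw [max_eq_left hle]
    have IH : ∀ H : Submodule K U, finrank K H < finrank K U → Good K H Y :=
      fun H hH => ih _ (by omega) H Y rfl
    by_cases htriv : w = 0 ∨ w = finrank K Y
    · obtain ⟨R, hR, hVR⟩ := good_trivial V w hle hV htriv
      have hfr := finrank_rangeLE (K := K) (U := U) R
      have := Submodule.finrank_mono hVR
      rw [hfr, hR, mul_comm] at this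
      refine ⟨this, fun heq => Or.inl ⟨hle, R, hR, Submodule.eq_of_le_of_finrank_eq hVR ?_⟩⟩
      rw [hfr, heq, hR, mul_comm]
    push Not at htriv
    obtain hlt | heq := hle.lt_or_eq
    · have := step_gt hlt IH V w (by omega) (by omega) hV
      exact ⟨this.1, fun h => Or.inl ⟨hle, this.2 h⟩⟩
    · by_cases hno : ∀ φ : U →ₗ[K] K, φ ≠ 0 → rkOne V φ = ⊥
      · have := step_eq_none heq IH V w (by omega) (by omega) hV hno
        exact ⟨this.le, fun h => by omega⟩
      · push Not at hno
        obtain ⟨φ, hφ, hex⟩ := hno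
        have := step_eq_some heq IH (fun H y hy hH => by
          have := Submodule.finrank_quotient_add_finrank (Submodule.span K {y})
          exact ih _ (by omega) H _ rfl) V w (by omega) (by omega) hV hφ hex
        refine ⟨this.1, fun h => ?_⟩
        rcases this.2 h with h | h
        · exact Or.inl ⟨hle, h⟩
        · exact Or.inr ⟨heq.ge, h⟩
  intro U Y _ _ _ _ _ _ hs
  rcases le_total (finrank K Y) (finrank K U) with h | h
  · exact half U Y hs h
  · exact good_of_dual (half (Dual K Y) (Dual K U) (by rw [Subspace.dual_finrank_eq, Subspace.dual_finrank_eq]; omega)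
      (by rw [Subspace.dual_finrank_eq, Subspace.dual_finrank_eq]; omega))

theorem good {K : Type u} [Field K] (U Y : Type u) [AddCommGroup U] [Module K U] [AddCommGroup Y] [Module K Y]
    [FiniteDimensional K U] [FiniteDimensional K Y] : Good K U Y := good_aux _ U Y rfl


theorem exists_sub_finrank {K : Type*} [Field K] {V : Type*} [AddCommGroup V] [Module K V]
    [FiniteDimensional K V] (W : Submodule K V) (t : ℕ) (ht : t ≤ finrank K W) :
    ∃ T : Submodule K V, T ≤ W ∧ finrank K T = t := by
  obtain ⟨f, hf⟩ := exists_linearIndependent_of_le_finrank ht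
  refine ⟨(Submodule.span K (Set.range f)).map W.subtype, Submodule.map_subtype_le _ _, ?_⟩
  rw [LinearEquiv.finrank_eq (Submodule.equivMapOfInjective W.subtype W.subtype_injective _).symm]
  rw [finrank_span_eq_card hf, Fintype.card_fin]

theorem exists_super_finrank {K : Type*} [Field K] {V : Type*} [AddCommGroup V] [Module K V]
    [FiniteDimensional K V] (W : Submodule K V) (hW : finrank K W < finrank K V) :
    ∃ T : Submodule K V, W ≤ T ∧ finrank K T = finrank K W + 1 := by
  obtain ⟨x, hx⟩ : ∃ x, x ∉ W := by
    by_contra h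
    push Not at h
    have : W = ⊤ := by ext; simp [h]
    rw [this, finrank_top] at hW
    omega
  refine ⟨W ⊔ Submodule.span K {x}, le_sup_left, ?_⟩
  have h0 : x ≠ 0 := by rintro rfl; exact hx W.zero_mem
  have h := Submodule.finrank_sup_add_finrank_inf_eq W (Submodule.span K {x})
  have h1 : W ⊓ Submodule.span K {x} = ⊥ := by
    rw [← disjoint_iff, Submodule.disjoint_span_singleton' h0]; exact hx
  rw [h1, finrank_bot, finrank_span_singleton h0] at h
  omega

section matpart
variable {K : Type u} [Field K] {m n : ℕ}

theorem mat_bound (hnm : n ≤ m) (𝒜 : Submodule K (Matrix (Fin m) (Fin n) K)) (w : ℕ) (hw : w ≤ n)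
    (h : ∀ A ∈ 𝒜, A.rank ≤ w) : finrank K 𝒜 ≤ m * w := by
  have e := (LinearEquiv.finrank_map_eq (Matrix.toLin' (R := K) (m := Fin m) (n := Fin n)) 𝒜)
  have := (good (K := K) (Fin n → K) (Fin m → K)
    (𝒜.map (Matrix.toLin' (R := K) (m := Fin m) (n := Fin n)).toLinearMap) w (by simpa using hw)
    (by simp; omega) (by
      rintro _ ⟨A, hA, rfl⟩
      exact h A hA)).1
  simp only [finrank_fin_fun, max_eq_right hnm] at this
  rw [mul_comm]
  rw [e] at this
  exact this

theorem mat_sub (hnm : n ≤ m) (𝒜 : Submodule K (Matrix (Fin m) (Fin n) K)) (w : ℕ) (hw : w + 1 ≤ n)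
    (h : ∀ A ∈ 𝒜, A.rank ≤ w + 1) (hf : finrank K 𝒜 = m * (w + 1)) :
    ∃ 𝒜' : Submodule K (Matrix (Fin m) (Fin n) K), 𝒜' ≤ 𝒜 ∧ finrank K 𝒜' = m * w ∧
      ∀ A ∈ 𝒜', A.rank ≤ w := by
  let T := (Matrix.toLin' (R := K) (m := Fin m) (n := Fin n))
  have e := LinearEquiv.finrank_map_eq T 𝒜
  have H := (good (K := K) (Fin n → K) (Fin m → K)
    (𝒜.map T.toLinearMap) (w+1) (by simpa using hw)
    (by simp; omega) (by
      rintro _ ⟨A, hA, rfl⟩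
      exact h A hA)).2
  simp only [finrank_fin_fun, max_eq_right hnm] at H
  have key : ∃ V' : Submodule K ((Fin n → K) →ₗ[K] (Fin m → K)), V' ≤ 𝒜.map T.toLinearMap ∧
      finrank K V' = m * w ∧ ∀ f ∈ V', finrank K (LinearMap.range f) ≤ w := by
    rcases H (by rw [mul_comm, ← hf]; exact e) with ⟨h1, R, hR, hV⟩ | ⟨h1, S, hS, hV⟩
    · obtain ⟨R', hR', hR1⟩ := exists_sub_finrank R w (by omega)
      refine ⟨rangeLE R', ?_, ?_, ?_⟩
      · rw [hV]; intro f hf x; exact hR' (hf x)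
      · rw [finrank_rangeLE, hR1, finrank_fin_fun]
        congr 1; omega
      · intro f hf
        rw [← hR1]
        apply Submodule.finrank_mono
        rintro _ ⟨x, rfl⟩
        exact hf x
    · obtain ⟨S', hS', hS1⟩ := exists_super_finrank S (by rw [finrank_fin_fun]; omega)
      have hq := Submodule.finrank_quotient_add_finrank S'
      rw [finrank_fin_fun] at hq
      refine ⟨kerGE S', ?_, ?_, ?_⟩
      · rw [hV]; intro f hf x hx; exact hf x (hS' hx)
      · rw [finrank_kerGE, finrank_fin_fun, mul_comm]
        congr 1; omega
      · intro f hf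
        have h2 := LinearMap.finrank_range_add_finrank_ker f
        have h3 : finrank K S' ≤ finrank K (LinearMap.ker f) := Submodule.finrank_mono (fun x hx => hf x hx)
        rw [finrank_fin_fun] at h2
        omega
  obtain ⟨V', h1, h2, h3⟩ := key
  refine ⟨V'.comap T.toLinearMap, ?_, ?_, ?_⟩
  · intro A hA
    obtain ⟨B, hB, hBA⟩ := h1 hA
    have : B = A := T.injective hBA
    exact this ▸ hB
  · have e2 := LinearEquiv.finrank_map_eq T (V'.comap T.toLinearMap)
    rw [← e2]
    have := Submodule.map_comap_eq_of_surjective (f := T.toLinearMap) T.surjective V'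
    rw [← h2]
    exact congrArg (fun X : Submodule K ((Fin n → K) →ₗ[K] (Fin m → K)) => finrank K X) this
  · intro A hA
    exact h3 _ hA

end matpart

section anti
variable {F : Type u} [Field F] [Fintype F] {m n : ℕ}

theorem bdd_ranks (𝒜 : Submodule F (Matrix (Fin m) (Fin n) F)) :
    BddAbove {w | ∃ A ∈ 𝒜, A.rank = w} := by
  refine ⟨n, ?_⟩
  rintro _ ⟨A, -, rfl⟩
  simpa using A.rank_le_width

theorem rank_le_maxrank {𝒜 : Submodule F (Matrix (Fin m) (Fin n) F)} {A} (hA : A ∈ 𝒜) :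
    A.rank ≤ maxrank 𝒜 := le_csSup (bdd_ranks 𝒜) ⟨A, hA, rfl⟩

theorem maxrank_le {𝒜 : Submodule F (Matrix (Fin m) (Fin n) F)} {w : ℕ}
    (h : ∀ A ∈ 𝒜, A.rank ≤ w) : maxrank 𝒜 ≤ w := by
  have hne : {w | ∃ A ∈ 𝒜, A.rank = w}.Nonempty := ⟨_, 0, 𝒜.zero_mem, rfl⟩
  refine csSup_le hne ?_
  rintro _ ⟨A, hA, rfl⟩
  exact h A hA

theorem maxrank_le_n (𝒜 : Submodule F (Matrix (Fin m) (Fin n) F)) : maxrank 𝒜 ≤ n :=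
  maxrank_le fun A _ => by simpa using A.rank_le_width

theorem opt_of (hnm : n ≤ m) (hm : 1 ≤ m) {𝒜 : Submodule F (Matrix (Fin m) (Fin n) F)} {w : ℕ}
    (hw : w ≤ n) (hf : finrank F 𝒜 = m * w) (h : ∀ A ∈ 𝒜, A.rank ≤ w) :
    IsOptAnticode 𝒜 ∧ maxrank 𝒜 = w := by
  have h1 := maxrank_le h
  have h2 := mat_bound hnm 𝒜 (maxrank 𝒜) (maxrank_le_n 𝒜) fun A hA => rank_le_maxrank hA
  have h3 : w ≤ maxrank 𝒜 := by
    rw [hf] at h2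
    exact Nat.le_of_mul_le_mul_left h2 hm
  have h4 : maxrank 𝒜 = w := le_antisymm h1 h3
  exact ⟨by rw [IsOptAnticode, h4, hf], h4⟩

theorem opt_sub (hnm : n ≤ m) (hm : 1 ≤ m) {𝒜 : Submodule F (Matrix (Fin m) (Fin n) F)} {w : ℕ}
    (ho : IsOptAnticode 𝒜) (h : maxrank 𝒜 = w + 1) :
    ∃ 𝒜' ≤ 𝒜, IsOptAnticode 𝒜' ∧ maxrank 𝒜' = w := by
  have hw : w + 1 ≤ n := h ▸ maxrank_le_n 𝒜
  obtain ⟨𝒜', h1, h2, h3⟩ := mat_sub hnm 𝒜 w hw (fun A hA => h ▸ rank_le_maxrank hA)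
    (by rw [← h]; exact ho)
  exact ⟨𝒜', h1, opt_of hnm hm (by omega) h2 h3⟩

theorem opt_top (hnm : n ≤ m) (hm : 1 ≤ m) :
    IsOptAnticode (⊤ : Submodule F (Matrix (Fin m) (Fin n) F)) ∧
      maxrank (⊤ : Submodule F (Matrix (Fin m) (Fin n) F)) = n :=
  opt_of hnm hm le_rfl (by simp [finrank_matrix]) fun A _ => by simpa using A.rank_le_width

theorem rkWt_le {𝒟 𝒜 : Submodule F (Matrix (Fin m) (Fin n) F)} (h : 𝒟 ≤ 𝒜) (ho : IsOptAnticode 𝒜) :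
    rkWt 𝒟 ≤ maxrank 𝒜 := Nat.sInf_le ⟨𝒜, ho, h, rfl⟩

theorem rkWt_spec (hnm : n ≤ m) (hm : 1 ≤ m) (𝒟 : Submodule F (Matrix (Fin m) (Fin n) F)) :
    ∃ 𝒜, IsOptAnticode 𝒜 ∧ 𝒟 ≤ 𝒜 ∧ maxrank 𝒜 = rkWt 𝒟 :=
  Nat.sInf_mem (s := {w | ∃ 𝒜 : Submodule F (Matrix (Fin m) (Fin n) F),
    IsOptAnticode 𝒜 ∧ 𝒟 ≤ 𝒜 ∧ maxrank 𝒜 = w}) ⟨_, ⊤, (opt_top hnm hm).1, le_top, rfl⟩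

theorem grw_le {𝒞 𝒟 : Submodule F (Matrix (Fin m) (Fin n) F)} {r : ℕ} (h : 𝒟 ≤ 𝒞)
    (hr : r ≤ finrank F 𝒟) : grw 𝒞 r ≤ rkWt 𝒟 := Nat.sInf_le ⟨𝒟, h, hr, rfl⟩

theorem grw_spec {𝒞 : Submodule F (Matrix (Fin m) (Fin n) F)} {r : ℕ} (hr : r ≤ finrank F 𝒞) :
    ∃ 𝒟 ≤ 𝒞, r ≤ finrank F 𝒟 ∧ rkWt 𝒟 = grw 𝒞 r :=
  Nat.sInf_mem (s := {w | ∃ 𝒟 : Submodule F (Matrix (Fin m) (Fin n) F),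
    𝒟 ≤ 𝒞 ∧ r ≤ Module.finrank F 𝒟 ∧ rkWt 𝒟 = w}) ⟨_, 𝒞, le_rfl, hr, rfl⟩

theorem grw_jump (hnm : n ≤ m) (hm : 1 ≤ m) {𝒞 : Submodule F (Matrix (Fin m) (Fin n) F)} {r v : ℕ}
    (hr : r + m ≤ finrank F 𝒞) (h : grw 𝒞 (r + m) = v + 1) : grw 𝒞 r ≤ v := by
  obtain ⟨D, hD, hrD, hwt⟩ := grw_spec hr
  obtain ⟨A, hA, hDA, hmA⟩ := rkWt_spec hnm hm D
  rw [hwt, h] at hmA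
  obtain ⟨A', hA', ho, hm'⟩ := opt_sub hnm hm hA hmA
  have h1 : finrank F A = m * (v + 1) := by rw [← hmA]; exact hA
  have h2 : finrank F A' = m * v := by rw [← hm']; exact ho
  have h3 := Submodule.finrank_sup_add_finrank_inf_eq D A'
  have h4 : finrank F ↥(D ⊔ A') ≤ finrank F A := Submodule.finrank_mono (sup_le hDA hA')
  have h5 : r ≤ finrank F ↥(D ⊓ A') := by
    rw [mul_add] at h1; omega
  exact (grw_le (inf_le_left.trans hD) h5).trans ((rkWt_le inf_le_right ho).trans hm'.le)

theorem forward_dir (hn : 1 ≤ n) (hnm : n ≤ m)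
    {k : ℕ} (d : Fin k → ℕ) (hmono : Monotone d) (hpos : ∀ r, 1 ≤ d r)
    (𝒞 : Submodule F (Matrix (Fin m) (Fin n) F)) (hk : finrank F 𝒞 = k)
    (hd : ∀ r : Fin k, grw 𝒞 (r.1 + 1) = d r) :
    (k ≤ m * n ∧ (∀ r, d r ≤ n) ∧
      ∀ v : ℕ, (Finset.univ.filter (fun r : Fin k => d r = v)).card ≤ m) := by
  have hm : 1 ≤ m := hn.trans hnm
  refine ⟨?_, ?_, ?_⟩
  · rw [← hk]
    refine (Submodule.finrank_le 𝒞).trans ?_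
    simp [finrank_matrix]
  · intro r
    rw [← hd r]
    refine (grw_le (𝒟 := 𝒞) le_rfl (by rw [hk]; exact r.2)).trans ?_
    exact (rkWt_le le_top (opt_top hnm hm).1).trans (opt_top hnm hm).2.le
  · intro v
    by_contra hcon
    push Not at hcon
    set s := Finset.univ.filter (fun r : Fin k => d r = v) with hs
    have hne : s.Nonempty := Finset.card_pos.mp (by omega)
    let a := s.min' hne
    let b := s.max' hne
    have hsub : s ⊆ Finset.Icc a b := fun x hx =>
      Finset.mem_Icc.mpr ⟨Finset.min'_le _ _ hx, Finset.le_max' _ _ hx⟩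
    have hc := Finset.card_le_card hsub
    rw [Fin.card_Icc] at hc
    have ha : d a = v := (Finset.mem_filter.mp (s.min'_mem hne)).2
    have hb : d b = v := (Finset.mem_filter.mp (s.max'_mem hne)).2
    have hab : a.1 + m ≤ b.1 := by omega
    have hlt : a.1 + m < k := lt_of_le_of_lt hab b.2
    have h1 : d ⟨a.1 + m, hlt⟩ = v := le_antisymm
      ((hmono (show (⟨a.1 + m, hlt⟩ : Fin k) ≤ b from hab)).trans hb.le)
      (ha.ge.trans (hmono (show a ≤ (⟨a.1 + m, hlt⟩ : Fin k) from Nat.le_add_right _ _)))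
    have hv : 1 ≤ v := ha ▸ hpos a
    have h2 := hd ⟨a.1 + m, hlt⟩
    rw [h1] at h2
    have h3 := grw_jump (r := a.1 + 1) (v := v - 1) hnm hm (𝒞 := 𝒞) (by omega)
      (by rw [show a.1 + 1 + m = a.1 + m + 1 by omega]; exact h2.trans (by omega))
    rw [hd a, ha] at h3
    omega
end anti


/-- tuples supported on the first `t` coordinates -/
def lowSupp (K : Type*) [Field K] (W : Type*) [AddCommGroup W] [Module K W] (n t : ℕ) :
    Submodule K (Fin n → W) where
  carrier := {a | ∀ i : Fin n, t ≤ i.1 → a i = 0}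
  add_mem' := fun ha hb i hi => by simp [ha i hi, hb i hi]
  zero_mem' := fun i _ => rfl
  smul_mem' := fun c f hf i hi => by simp [hf i hi]

theorem finrank_lowSupp (K : Type*) [Field K] (W : Type*) [AddCommGroup W] [Module K W]
    [FiniteDimensional K W] (n t : ℕ) (ht : t ≤ n) :
    finrank K (lowSupp K W n t) = t * finrank K W := by
  let e : lowSupp K W n t ≃ₗ[K] (Fin t → W) :=
    { toFun := fun a j => a.1 ⟨j.1, by omega⟩
      map_add' := fun a b => rfl
      map_smul' := fun c a => rfl
      invFun := fun b => ⟨fun i => if h : i.1 < t then b ⟨i.1, h⟩ else 0, fun i hi => by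
        simp [not_lt.mpr hi]⟩
      left_inv := fun a => by
        ext i
        by_cases h : i.1 < t
        · simp [h]
        · simp [h, a.2 i (not_lt.mp h)]
      right_inv := fun b => by
        ext j
        simp }
  rw [e.finrank_eq, finrank_pi_fintype]
  simp

section mrd
variable {F : Type u} [Field F] [Fintype F]
variable {L : Type*} [Field L] [Algebra F L] [FiniteDimensional F L]

/-- linearized polynomial as a linear map -/
noncomputable def linPoly (F : Type u) [Field F] [Fintype F] (L : Type*) [Field L] [Algebra F L]
    (n : ℕ) : (Fin n → L) →ₗ[F] (L →ₗ[F] L) where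
  toFun a := ∑ i, a i • ((FiniteField.frobeniusAlgHom F L) ^ i.1).toLinearMap
  map_add' a b := by simp [add_smul, Finset.sum_add_distrib]
  map_smul' c a := by simp [Finset.smul_sum]

theorem linPoly_apply (n : ℕ) (a : Fin n → L) (x : L) :
    linPoly F L n a x = ∑ i, a i * x ^ (Fintype.card F ^ i.1) := by
  simp [linPoly, AlgHom.coe_pow, FiniteField.coe_frobeniusAlgHom, pow_iterate]

theorem ker_linPoly (n t : ℕ) (a : Fin n → L) (ha : a ∈ lowSupp F L n (t + 1)) (h0 : a ≠ 0) :
    finrank F (LinearMap.ker (linPoly F L n a)) ≤ t := by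
  classical
  have hq : 1 < Fintype.card F := Fintype.one_lt_card
  let p : Polynomial L := ∑ i : Fin n, Polynomial.C (a i) * Polynomial.X ^ (Fintype.card F ^ i.1)
  have hc : ∀ j : Fin n, p.coeff (Fintype.card F ^ j.1) = a j := by
    intro j
    simp only [p, Polynomial.finsetSum_coeff, Polynomial.coeff_C_mul, Polynomial.coeff_X_pow]
    rw [Finset.sum_eq_single j]
    · simp
    · intro b _ hb
      rw [if_neg, mul_zero]
      intro h
      exact hb (Fin.ext (Nat.pow_right_injective hq h).symm)
    · simp
  have hp0 : p ≠ 0 := by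
    intro h
    apply h0
    ext j
    rw [← hc j, h]; simp
  have hdeg : p.natDegree ≤ Fintype.card F ^ t := by
    apply Polynomial.natDegree_sum_le_of_forall_le
    intro i _
    by_cases hi : t + 1 ≤ i.1
    · simp [ha i hi]
    · refine (Polynomial.natDegree_C_mul_X_pow_le _ _).trans ?_
      exact Nat.pow_le_pow_right (by omega) (by omega)
  have hsub : (LinearMap.ker (linPoly F L n a) : Set L) ⊆ (p.roots.toFinset : Set L) := by
    intro x hx
    have hx' : linPoly F L n a x = 0 := hx
    rw [linPoly_apply] at hx'
    simp only [Finset.mem_coe, Multiset.mem_toFinset, Polynomial.mem_roots hp0, Polynomial.IsRoot.def]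
    simpa [p, Polynomial.eval_finsetSum] using hx'
  have h1 := Set.ncard_le_ncard hsub (Finset.finite_toSet _)
  rw [Set.ncard_coe_finset] at h1
  have h2 : p.roots.toFinset.card ≤ Fintype.card F ^ t :=
    (Multiset.toFinset_card_le _).trans ((Polynomial.card_roots' p).trans hdeg)
  have h3 : (LinearMap.ker (linPoly F L n a) : Set L).ncard =
      Fintype.card F ^ finrank F (LinearMap.ker (linPoly F L n a)) := by
    rw [← Nat.card_coe_set_eq, ← Nat.card_eq_fintype_card]
    exact Module.natCard_eq_pow_finrank (K := F) (V := LinearMap.ker (linPoly F L n a))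
  rw [h3] at h1
  exact (Nat.pow_le_pow_iff_right hq).mp (h1.trans h2)

end mrd

theorem exists_ext (F : Type u) [Field F] [Fintype F] (m : ℕ) (hm : 1 ≤ m) :
    ∃ (L : Type) (_ : Field L) (_ : Algebra F L), FiniteDimensional F L ∧ finrank F L = m := by
  obtain ⟨p, hp⟩ := CharP.exists F
  have : Fact p.Prime := ⟨CharP.char_is_prime F p⟩
  have : NeZero m := ⟨by omega⟩
  exact ⟨FiniteField.Extension F p m, inferInstance, inferInstance, inferInstance,
    FiniteField.finrank_extension F p m⟩

theorem exists_mrd (F : Type u) [Field F] [Fintype F] (m n : ℕ) (hn : 1 ≤ n) (hnm : n ≤ m) :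
    ∃ M : ℕ → Submodule F (Matrix (Fin m) (Fin n) F), Antitone M ∧
      (∀ u ≤ n, m * (n - u) ≤ finrank F (M u)) ∧
      ∀ u, ∀ A ∈ M u, A ≠ 0 → u < A.rank := by
  obtain ⟨L, _, _, _, hL⟩ := exists_ext F m (hn.trans hnm)
  obtain ⟨β, hβ⟩ : ∃ β : (Fin n → F) →ₗ[F] L, Function.Injective β := by
    let b : (Fin m → F) ≃ₗ[F] L := (LinearEquiv.ofFinrankEq _ _ (by simp [hL]))
    let ι : (Fin n → F) →ₗ[F] (Fin m → F) :=
      { toFun := fun a i => if h : i.1 < n then a ⟨i.1, h⟩ else 0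
        map_add' := fun a b => by ext i; by_cases h : i.1 < n <;> simp [h]
        map_smul' := fun c b => by ext i; by_cases h : i.1 < n <;> simp [h] }
    refine ⟨b.toLinearMap ∘ₗ ι, ?_⟩
    rw [LinearMap.coe_comp]
    refine b.injective.comp ?_
    intro x y hxy
    ext j
    have := congrFun hxy ⟨j.1, by omega⟩
    simpa [ι] using this
  let c : L ≃ₗ[F] (Fin m → F) := LinearEquiv.ofFinrankEq _ _ (by simp [hL])
  let Φ : (Fin n → L) →ₗ[F] Matrix (Fin m) (Fin n) F :=
    { toFun := fun a => LinearMap.toMatrix' (c.toLinearMap ∘ₗ linPoly F L n a ∘ₗ β)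
      map_add' := fun a b => by
        simp [LinearMap.add_comp, LinearMap.comp_add]
      map_smul' := fun r a => by
        simp [LinearMap.smul_comp, LinearMap.comp_smul] }
  have hrank : ∀ a, (Φ a).rank = finrank F (LinearMap.range (linPoly F L n a ∘ₗ β)) := by
    intro a
    have h1 : (Φ a).rank = finrank F (LinearMap.range (c.toLinearMap ∘ₗ linPoly F L n a ∘ₗ β)) := by
      change finrank F (LinearMap.range (Matrix.toLin' (LinearMap.toMatrix' (c.toLinearMap ∘ₗ linPoly F L n a ∘ₗ β)))) = _
      rw [Matrix.toLin'_toMatrix']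
    rw [h1, LinearMap.range_comp]
    exact LinearEquiv.finrank_map_eq c _
  have hr : ∀ t, ∀ a ∈ lowSupp F L n (t + 1), a ≠ 0 → n ≤ (Φ a).rank + t := by
    intro t a ha h0
    rw [hrank]
    have h1 := LinearMap.finrank_range_add_finrank_ker (linPoly F L n a ∘ₗ β)
    have h2 : finrank F (LinearMap.ker (linPoly F L n a ∘ₗ β)) ≤ finrank F (LinearMap.ker (linPoly F L n a)) := by
      rw [LinearMap.ker_comp]
      have h3 := LinearEquiv.finrank_eq (Submodule.equivMapOfInjective β hβ (Submodule.comap β (LinearMap.ker (linPoly F L n a))))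
      rw [h3]
      exact Submodule.finrank_mono (Submodule.map_comap_le _ _)
    have h3 := ker_linPoly n t a ha h0
    rw [finrank_fin_fun] at h1
    omega
  have hΦ : Function.Injective Φ := by
    rw [← LinearMap.ker_eq_bot, LinearMap.ker_eq_bot']
    intro a ha
    by_contra h0
    have := hr (n - 1) a (fun i hi => by omega) h0
    rw [ha, Matrix.rank_zero] at this
    omega
  refine ⟨fun u => (lowSupp F L n (n - u)).map Φ, ?_, ?_, ?_⟩
  · intro u v huv
    apply Submodule.map_mono
    intro a ha i hi
    exact ha i (by omega)
  · intro u hu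
    rw [← LinearEquiv.finrank_eq (Submodule.equivMapOfInjective Φ hΦ _), finrank_lowSupp _ _ _ _ (by omega), hL,
      mul_comm]
  · rintro u _ ⟨a, ha, rfl⟩ h0
    have ha0 : a ≠ 0 := by rintro rfl; simp at h0
    by_cases hu : u < n
    · have := hr (n - u - 1) a (fun i hi => ha i (by omega)) ha0
      omega
    · exact absurd (funext fun i => ha i (by omega)) ha0


section constr
variable {F : Type u} [Field F] [Fintype F] {m n : ℕ}

/-- matrices supported on the first `w` columns -/
def colLow (F : Type u) [Field F] (m n w : ℕ) : Submodule F (Matrix (Fin m) (Fin n) F) :=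
  (lowSupp F (Fin m → F) n w).comap (Matrix.transposeLinearEquiv (Fin m) (Fin n) F F).toLinearMap

theorem mem_colLow {w : ℕ} {A : Matrix (Fin m) (Fin n) F} :
    A ∈ colLow F m n w ↔ ∀ j : Fin n, w ≤ j.1 → ∀ i, A i j = 0 := by
  constructor
  · intro h j hj i
    exact congrFun (h j hj) i
  · intro h j hj
    funext i
    exact h j hj i

theorem colLow_mono {u w : ℕ} (h : u ≤ w) : colLow F m n u ≤ colLow F m n w := by
  intro A hA
  rw [mem_colLow] at *
  exact fun j hj => hA j (h.trans hj)

theorem finrank_colLow {w : ℕ} (hw : w ≤ n) : finrank F (colLow F m n w) = m * w := by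
  let T := Matrix.transposeLinearEquiv (Fin m) (Fin n) F F
  have e := LinearEquiv.finrank_map_eq T (colLow F m n w)
  have h1 : (colLow F m n w).map T.toLinearMap = lowSupp F (Fin m → F) n w :=
    Submodule.map_comap_eq_of_surjective (f := T.toLinearMap) T.surjective _
  have h2 := finrank_lowSupp F (Fin m → F) n w hw
  rw [finrank_fin_fun] at h2
  rw [← e, mul_comm, ← h2]
  exact congrArg (fun X : Submodule F (Fin n → Fin m → F) => finrank F X) h1

theorem rank_colLow {w : ℕ} (hw : w ≤ n) {A : Matrix (Fin m) (Fin n) F} (hA : A ∈ colLow F m n w) :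
    A.rank ≤ w := by
  rw [← Matrix.rank_transpose]
  have h2 := finrank_lowSupp F F n w hw
  rw [finrank_self, mul_one] at h2
  rw [← h2]
  apply Submodule.finrank_mono
  rintro _ ⟨y, rfl⟩ j hj
  simp only [Matrix.mulVecLin_apply, Matrix.mulVec, dotProduct, Matrix.transpose_apply]
  exact Finset.sum_eq_zero fun i _ => by rw [mem_colLow.mp hA j hj i, zero_mul]

theorem finrank_sup_of_disj {V : Type*} [AddCommGroup V] [Module F V] [FiniteDimensional F V]
    {X Y : Submodule F V} (h : Disjoint X Y) : finrank F ↥(X ⊔ Y) = finrank F X + finrank F Y := by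
  have := Submodule.finrank_sup_add_finrank_inf_eq X Y
  rw [disjoint_iff.mp h, finrank_bot] at this
  omega

theorem disj_mrd {M : ℕ → Submodule F (Matrix (Fin m) (Fin n) F)}
    (hM : ∀ u, ∀ A ∈ M u, A ≠ 0 → u < A.rank) {u : ℕ} {D : Submodule F (Matrix (Fin m) (Fin n) F)}
    (hD : ∀ A ∈ D, A.rank ≤ u) : Disjoint D (M u) := by
  rw [Submodule.disjoint_def]
  intro A h1 h2
  by_contra h0
  have := hM u A h2 h0
  have := hD A h1
  omega

theorem recur (hn : 1 ≤ n) (hnm : n ≤ m) {M : ℕ → Submodule F (Matrix (Fin m) (Fin n) F)}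
    (hanti : Antitone M) (hdim : ∀ u ≤ n, m * (n - u) ≤ finrank F (M u))
    (hM : ∀ u, ∀ A ∈ M u, A ≠ 0 → u < A.rank)
    (N : ℕ → ℕ) (hN0 : N 0 = 0) (hN : Monotone N) (hstep : ∀ w, N (w + 1) ≤ N w + m)
    (w : ℕ) (hw : w ≤ n) :
    ∃ E ≤ colLow F m n w, finrank F E = N w ∧ ∀ u ≤ w,
      (∃ T ≤ E, T ≤ M u ∧ finrank F T = N w - N u) ∧
      (∃ E' ≤ E, E' ≤ colLow F m n u ∧ finrank F E' = N u) := by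
  induction w with
  | zero =>
    refine ⟨⊥, bot_le, by simp [hN0], fun u hu => ?_⟩
    obtain rfl : u = 0 := by omega
    exact ⟨⟨⊥, le_rfl, bot_le, by simp⟩, ⟨⊥, le_rfl, bot_le, by simp [hN0]⟩⟩
  | succ w ih =>
    obtain ⟨E, hE, hEf, hEu⟩ := ih (by omega)
    have hinf : m ≤ finrank F ↥(colLow F m n (w + 1) ⊓ M w) := by
      have h1 := Submodule.finrank_sup_add_finrank_inf_eq (colLow F m n (w + 1)) (M w)
      have h2 := Submodule.finrank_le (colLow F m n (w + 1) ⊔ M w)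
      rw [finrank_matrix, Fintype.card_fin, Fintype.card_fin, finrank_self, mul_one] at h2
      rw [finrank_colLow hw] at h1
      have h3 := hdim w (by omega)
      have h4 : m * (w + 1) + m * (n - w) = m * n + m := by
        rw [← mul_add, show w + 1 + (n - w) = n + 1 by omega, mul_add, mul_one]
      omega
    have hs := hstep w
    obtain ⟨C', hC', hCf⟩ := exists_sub_finrank (colLow F m n (w + 1) ⊓ M w) (N (w + 1) - N w) (by omega)
    have hmw := hN (Nat.le_succ w)
    have hdisj : Disjoint E C' := by
      refine Disjoint.mono hE (hC'.trans inf_le_right) ?_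
      exact disj_mrd hM fun A hA => rank_colLow (by omega) hA
    have hfin : finrank F ↥(E ⊔ C') = N (w + 1) := by
      rw [finrank_sup_of_disj hdisj, hEf, hCf]
      simp only [Nat.succ_eq_add_one] at hmw
      omega
    have hle : E ⊔ C' ≤ colLow F m n (w + 1) :=
      sup_le (hE.trans (colLow_mono (Nat.le_succ w))) (hC'.trans inf_le_left)
    refine ⟨E ⊔ C', hle, hfin, fun u hu => ?_⟩
    rcases Nat.lt_or_ge w u with h | h
    · obtain rfl : u = w + 1 := by omega
      exact ⟨⟨⊥, bot_le, bot_le, by simp⟩, ⟨E ⊔ C', le_rfl, hle, hfin⟩⟩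
    · obtain ⟨⟨T, hT, hTM, hTf⟩, ⟨E', hE', hEc, hEf'⟩⟩ := hEu u h
      refine ⟨⟨T ⊔ C', sup_le_sup_right hT _, sup_le hTM ((hC'.trans inf_le_right).trans (hanti h)), ?_⟩,
        ⟨E', hE'.trans le_sup_left, hEc, hEf'⟩⟩
      rw [finrank_sup_of_disj (hdisj.mono_left hT), hTf, hCf]
      have := hN h
      simp only [Nat.succ_eq_add_one] at hmw
      omega

theorem backward_dir (hn : 1 ≤ n) (hnm : n ≤ m)
    {k : ℕ} (d : Fin k → ℕ) (hmono : Monotone d) (hpos : ∀ r, 1 ≤ d r)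
    (hdn : ∀ r, d r ≤ n)
    (hmult : ∀ v : ℕ, (Finset.univ.filter (fun r : Fin k => d r = v)).card ≤ m) :
    ∃ 𝒞 : Submodule F (Matrix (Fin m) (Fin n) F),
      finrank F 𝒞 = k ∧ ∀ r : Fin k, grw 𝒞 (r.1 + 1) = d r := by
  have hm : 1 ≤ m := hn.trans hnm
  obtain ⟨M, hanti, hdim, hM⟩ := exists_mrd F m n hn hnm
  let N : ℕ → ℕ := fun w => (Finset.univ.filter (fun r : Fin k => d r ≤ w)).card
  have hN0 : N 0 = 0 := by
    simp only [N, Finset.card_eq_zero, Finset.filter_eq_empty_iff]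
    intro r _
    have := hpos r
    omega
  have hN : Monotone N := by
    intro u v huv
    apply Finset.card_le_card
    intro r
    simp only [Finset.mem_filter, Finset.mem_univ, true_and]
    omega
  have hstep : ∀ w, N (w + 1) ≤ N w + m := by
    intro w
    have h1 : (Finset.univ.filter (fun r : Fin k => d r ≤ w + 1)) ⊆
        (Finset.univ.filter (fun r : Fin k => d r ≤ w)) ∪
        (Finset.univ.filter (fun r : Fin k => d r = w + 1)) := by
      intro r
      simp only [Finset.mem_filter, Finset.mem_univ, true_and, Finset.mem_union]
      omega
    have h2 := (Finset.card_le_card h1).trans (Finset.card_union_le _ _)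
    have h3 := hmult (w + 1)
    simp only [N]
    omega
  have hNn : N n = k := by
    simp only [N, hdn, Finset.filter_true, Finset.card_univ, Fintype.card_fin]
  obtain ⟨E, hE, hEf, hEu⟩ := recur hn hnm hanti hdim hM N hN0 hN hstep n le_rfl
  rw [hNn] at hEf
  refine ⟨E, hEf, fun r => le_antisymm ?_ ?_⟩
  · obtain ⟨E', hE', hEc, hEf'⟩ := (hEu (d r) (hdn r)).2
    have hr : r.1 + 1 ≤ N (d r) := by
      have h1 : Finset.Iic r ⊆ (Finset.univ.filter (fun s : Fin k => d s ≤ d r)) := by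
        intro s hs
        simp only [Finset.mem_filter, Finset.mem_univ, true_and]
        exact hmono (Finset.mem_Iic.mp hs)
      have h2 := Finset.card_le_card h1
      rwa [Fin.card_Iic] at h2
    have ho := opt_of (𝒜 := colLow F m n (d r)) hnm hm (hdn r) (finrank_colLow (hdn r))
      fun A hA => rank_colLow (hdn r) hA
    exact (grw_le hE' (hr.trans hEf'.ge)).trans ((rkWt_le hEc ho.1).trans ho.2.le)
  · obtain ⟨D, hD, hrD, hwt⟩ := grw_spec (𝒞 := E) (r := r.1 + 1) (by rw [hEf]; exact r.2)
    obtain ⟨A, hA, hDA, hmA⟩ := rkWt_spec hnm hm D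
    rw [hwt] at hmA
    by_contra hcon
    push Not at hcon
    set u := grw E (r.1 + 1) with hu
    have hun : u ≤ n := hcon.le.trans (hdn r)
    obtain ⟨T, hT, hTM, hTf⟩ := (hEu u hun).1
    have hdis : Disjoint D T := by
      refine Disjoint.mono_right hTM ?_
      exact disj_mrd hM fun B hB => (rank_le_maxrank (hDA hB)).trans hmA.le
    have h1 := finrank_sup_of_disj hdis
    have h2 : finrank F ↥(D ⊔ T) ≤ finrank F E := Submodule.finrank_mono (sup_le hD hT)
    have h3 : N u ≤ r.1 := by
      have h1 : (Finset.univ.filter (fun s : Fin k => d s ≤ u)) ⊆ Finset.Iio r := by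
        intro s hs
        simp only [Finset.mem_filter, Finset.mem_univ, true_and] at hs
        rw [Finset.mem_Iio]
        by_contra hsr
        have := hmono (not_lt.mp hsr)
        omega
      have h2 := Finset.card_le_card h1
      rwa [Fin.card_Iio] at h2
    have h4 := hN hun
    have h5 := r.2
    omega
end constr

/-- For `1 ≤ n ≤ m`, a non-decreasing sequence of positive integers `d_1 ≤ ⋯ ≤ d_k` is the
sequence of generalized rank weights of a linear subcode of `F_q^{m×n}` if and only if
`k ≤ mn`, `d_k ≤ n`, and every value occurs at most `m` times among `d_1, …, d_k`. -/
theorem rank_metric_grw_characterization {m n : ℕ} (hn : 1 ≤ n) (hnm : n ≤ m)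
    {k : ℕ} (d : Fin k → ℕ) (hmono : Monotone d) (hpos : ∀ r, 1 ≤ d r) :
    (∃ 𝒞 : Submodule F (Matrix (Fin m) (Fin n) F),
      Module.finrank F 𝒞 = k ∧ ∀ r : Fin k, grw 𝒞 (r.1 + 1) = d r) ↔
    (k ≤ m * n ∧ (∀ r, d r ≤ n) ∧
      ∀ v : ℕ, (Finset.univ.filter (fun r : Fin k => d r = v)).card ≤ m) := by
  constructor
  · rintro ⟨𝒞, hk, hd⟩
    exact forward_dir hn hnm d hmono hpos 𝒞 hk hd
  · rintro ⟨_, hdn, hmult⟩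
    exact backward_dir hn hnm d hmono hpos hdn hmult
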